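/- Let Γ be an infinite torsion-free additive abelian group (if n • g = 0 for an integer n ≠ 0 then g = 0). Let T be a finite tree of diameter 4 with central vertex v_c (the unique vertex with dist(v_c, u) ≤ 2 for every vertex u). Then T is Γ-vertex magic if and only if one of the following holds: (i) every non-pendant vertex of T is a strong support vertex; (ii) v_c is a weak support vertex and every non-pendant vertex other than v_c is a strong support vertex. -/

import Mathlib

/-!
A support vertex is labelled by the magic constant `μ`, since it is the only neighbour of a pendant
vertex. Hence a vertex adjacent to a support vertex cannot have degree two, as its other neighbour
would be labelled `0`; and a vertex of degree `d ≥ 2` all of whose neighbours are support vertices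
would give `d • μ = μ`, which torsion-freeness forbids.

In a tree of radius two every non-pendant vertex other than the centre is a support vertex adjacent
to the centre, so these obstructions force the centre to be a support vertex and every non-pendant
vertex to have degree at least three. This suffices: fix `g ≠ 0` and choose a pendant neighbour of
each non-pendant vertex `x`; label that neighbour `(2 - deg x) • g`, and every unchosen vertex `g`.
For a non-pendant `x` other than the centre, all neighbours but the centre are pendant, so this
degree bound means that `x` is a strong support vertex.
-/

section Support

variable {V : Type*} (G : SimpleGraph V) [G.LocallyFinite]

/-- A support vertex: one with a pendant neighbour. -/
def IsSupport (x : V) : Prop :=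
  ∃ a, G.Adj x a ∧ G.degree a = 1

/-- A strong support vertex: one with at least two pendant neighbours. -/
def IsStrongSupport (x : V) : Prop :=
  ∃ a b, a ≠ b ∧ G.Adj x a ∧ G.Adj x b ∧ G.degree a = 1 ∧ G.degree b = 1

/-- A weak support vertex: one with exactly one pendant neighbour. -/
def IsWeakSupport (x : V) : Prop :=
  ∃! a, G.Adj x a ∧ G.degree a = 1

variable {G}

lemma isSupport_iff_isStrongSupport_or_isWeakSupport {x : V} :
    IsSupport G x ↔ IsStrongSupport G x ∨ IsWeakSupport G x := by
  constructor
  · rintro ⟨a, hxa, ha⟩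
    by_cases hunique : ∀ b, G.Adj x b ∧ G.degree b = 1 → b = a
    · exact .inr ⟨a, ⟨hxa, ha⟩, hunique⟩
    · push Not at hunique
      obtain ⟨b, ⟨hxb, hb⟩, hba⟩ := hunique
      exact .inl ⟨b, a, hba, hxb, hxa, hb, ha⟩
  · rintro (⟨a, _, _, hxa, _, ha, _⟩ | hweak)
    · exact ⟨a, hxa, ha⟩
    · exact hweak.exists

lemma isSupport_and_forall_ne_isStrongSupport_iff {c : V} (hc : G.degree c ≠ 1) :
    (IsSupport G c ∧ ∀ x, x ≠ c → G.degree x ≠ 1 → IsStrongSupport G x) ↔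
      (∀ x, G.degree x ≠ 1 → IsStrongSupport G x) ∨
        (IsWeakSupport G c ∧ ∀ x, x ≠ c → G.degree x ≠ 1 → IsStrongSupport G x) := by
  rw [isSupport_iff_isStrongSupport_or_isWeakSupport, or_and_right]
  refine or_congr_left ⟨fun ⟨hstrong, h⟩ x hx ↦ ?_, fun h ↦ ⟨h c hc, fun x _ ↦ h x⟩⟩
  obtain rfl | hxc := eq_or_ne x c
  exacts [hstrong, h x hxc hx]

lemma eq_of_adj_of_degree_eq_one {u a b : V} (hu : G.degree u = 1) (ha : G.Adj u a)
    (hb : G.Adj u b) : a = b :=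
  (SimpleGraph.degree_eq_one_iff_existsUnique_adj.1 hu).unique ha hb

lemma degree_ne_one_of_adj_of_adj {u a b : V} (hab : a ≠ b) (ha : G.Adj u a) (hb : G.Adj u b) :
    G.degree u ≠ 1 :=
  fun hu ↦ hab (eq_of_adj_of_degree_eq_one hu ha hb)

lemma exists_adj_ne_of_degree_ne_one {x c : V} (hc : G.Adj x c) (hx : G.degree x ≠ 1) :
    ∃ y, G.Adj x y ∧ y ≠ c := by
  contrapose! hx
  exact SimpleGraph.degree_eq_one_iff_existsUnique_adj.2 ⟨c, hc, hx⟩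

lemma three_le_degree_iff_isStrongSupport {x c : V} (hxc : G.Adj x c) (hc : G.degree c ≠ 1)
    (h : ∀ y, G.Adj x y → y ≠ c → G.degree y = 1) : 3 ≤ G.degree x ↔ IsStrongSupport G x := by
  classical
  have hcard : ((G.neighborFinset x).erase c).card = G.degree x - 1 :=
    Finset.card_erase_of_mem ((G.mem_neighborFinset x c).2 hxc)
  have hpendant (y : V) : y ∈ (G.neighborFinset x).erase c ↔ G.Adj x y ∧ G.degree y = 1 := by
    rw [Finset.mem_erase, G.mem_neighborFinset]
    exact ⟨fun ⟨hyc, hxy⟩ ↦ ⟨hxy, h y hxy hyc⟩, fun ⟨hxy, hy⟩ ↦ ⟨fun hyc ↦ hc (hyc ▸ hy), hxy⟩⟩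
  calc 3 ≤ G.degree x
    _ ↔ 1 < ((G.neighborFinset x).erase c).card := by omega
    _ ↔ IsStrongSupport G x := by
      simp only [Finset.one_lt_card, hpendant, IsStrongSupport]
      grind

lemma degree_eq_one_of_preconnected_of_adj (hG : G.Preconnected) {a b : V} (hab : G.Adj a b)
    (ha : G.degree a = 1) (hb : G.degree b = 1) (v : V) : G.degree v = 1 := by
  obtain ⟨p⟩ := hG a v
  induction p generalizing b with
  | nil => exact ha
  | cons hau _ ih =>
    obtain rfl := eq_of_adj_of_degree_eq_one ha hab hau
    exact ih hab.symm hb ha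

end Support

section Magic

variable {V Γ : Type*} {G : SimpleGraph V} [G.LocallyFinite]

/-- A `Γ`-vertex magic labelling `ℓ` of `G` with magic constant `μ`. -/
def IsVertexMagicLabeling [AddCommMonoid Γ] (G : SimpleGraph V) [G.LocallyFinite] (ℓ : V → Γ)
    (μ : Γ) : Prop :=
  (∀ w, ℓ w ≠ 0) ∧ ∀ w, ∑ x ∈ G.neighborFinset w, ℓ x = μ

lemma sum_neighborFinset_of_degree_eq_one [AddCommMonoid Γ] (ℓ : V → Γ) {u x : V}
    (hu : G.degree u = 1) (hux : G.Adj u x) : ∑ z ∈ G.neighborFinset u, ℓ z = ℓ x := by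
  refine Finset.sum_eq_single_of_mem x ((G.mem_neighborFinset u x).2 hux) fun y hy hyx ↦ ?_
  exact absurd (eq_of_adj_of_degree_eq_one hu ((G.mem_neighborFinset u y).1 hy) hux) hyx

lemma IsVertexMagicLabeling.apply_eq_of_isSupport [AddCommMonoid Γ] {ℓ : V → Γ} {μ : Γ}
    (h : IsVertexMagicLabeling G ℓ μ) {x : V} (hx : IsSupport G x) : ℓ x = μ := by
  obtain ⟨a, hxa, ha⟩ := hx
  rw [← sum_neighborFinset_of_degree_eq_one ℓ ha hxa.symm, h.2 a]

lemma IsVertexMagicLabeling.degree_ne_two_of_adj_isSupport [AddCancelCommMonoid Γ] {ℓ : V → Γ}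
    {μ : Γ} (h : IsVertexMagicLabeling G ℓ μ) {x s : V} (hxs : G.Adj x s)
    (hs : IsSupport G s) : G.degree x ≠ 2 := by
  classical
  intro hx
  have hs_mem : s ∈ G.neighborFinset x := (G.mem_neighborFinset x s).2 hxs
  obtain ⟨y, hy⟩ : ∃ y, (G.neighborFinset x).erase s = {y} := by
    rw [← Finset.card_eq_one, Finset.card_erase_of_mem hs_mem, G.card_neighborFinset_eq_degree, hx]
  have hsum : ℓ s + ℓ y = μ := by
    rw [← h.2 x, ← Finset.add_sum_erase _ ℓ hs_mem, hy, Finset.sum_singleton]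
  rw [h.apply_eq_of_isSupport hs, add_eq_left] at hsum
  exact h.1 y hsum

lemma IsVertexMagicLabeling.exists_adj_not_isSupport [AddCancelCommMonoid Γ]
    [IsAddTorsionFree Γ] {ℓ : V → Γ} {μ : Γ} (h : IsVertexMagicLabeling G ℓ μ) {x : V}
    (hx : 1 < G.degree x) :
    ∃ y, G.Adj x y ∧ ¬ IsSupport G y := by
  by_contra! hsupp
  have hlabel (y : V) (hy : G.Adj x y) : ℓ y = μ := h.apply_eq_of_isSupport (hsupp y hy)
  obtain ⟨s, hs⟩ := (G.degree_pos_iff_exists_adj x).1 (by omega)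
  have hμ : μ ≠ 0 := hlabel s hs ▸ h.1 s
  have hsum : G.degree x • μ = μ := by
    rw [← G.card_neighborFinset_eq_degree, ← Finset.sum_const, ← h.2 x]
    refine Finset.sum_congr rfl fun y hy ↦ ?_
    rw [h.2 x, hlabel y ((G.mem_neighborFinset x y).1 hy)]
  have hzero : (G.degree x - 1) • μ = 0 := by
    rw [← add_eq_right (b := μ), ← succ_nsmul, Nat.sub_add_cancel hx.le, hsum]
  exact (Nat.sub_pos_of_lt hx).ne' ((nsmul_eq_zero_iff_left hμ).1 hzero)

lemma sum_neighborFinset_eq_of_forall_ne [AddCommGroup Γ] {ℓ : V → Γ} {g : Γ} {w q : V}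
    (hwq : G.Adj w q) (hq : ℓ q = (2 - (G.degree w : ℤ)) • g)
    (hne : ∀ z, G.Adj w z → z ≠ q → ℓ z = g) : ∑ z ∈ G.neighborFinset w, ℓ z = g := by
  classical
  have hmem : q ∈ G.neighborFinset w := (G.mem_neighborFinset w q).2 hwq
  have hrest : ∀ z ∈ (G.neighborFinset w).erase q, ℓ z = g := fun z hz ↦
    hne z ((G.mem_neighborFinset w z).1 (Finset.mem_of_mem_erase hz)) (Finset.ne_of_mem_erase hz)
  calc ∑ z ∈ G.neighborFinset w, ℓ z
    _ = (2 - (G.degree w : ℤ)) • g + (G.degree w - 1) • g := by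
      rw [← Finset.add_sum_erase _ ℓ hmem, hq, Finset.sum_congr rfl hrest, Finset.sum_const,
        Finset.card_erase_of_mem hmem, G.card_neighborFinset_eq_degree]
    _ = (1 : ℤ) • g := by
      have := hwq.degree_pos_left
      rw [← natCast_zsmul, ← add_zsmul]
      congr 1
      omega
    _ = g := one_zsmul g

lemma exists_isVertexMagicLabeling_of_three_le_degree [AddCommGroup Γ] [IsAddTorsionFree Γ]
    [Nontrivial Γ] (hpendant : ∀ a b, G.Adj a b → G.degree a = 1 → G.degree b ≠ 1)
    (hsupp : ∀ x, G.degree x ≠ 1 → IsSupport G x) (hdeg : ∀ x, G.degree x ≠ 1 → 3 ≤ G.degree x) :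
    ∃ (ℓ : V → Γ) (μ : Γ), IsVertexMagicLabeling G ℓ μ := by
  obtain ⟨g, hg⟩ := exists_ne (0 : Γ)
  choose p hp_adj hp_degree using fun x : {x // G.degree x ≠ 1} ↦ hsupp x x.2
  have hp_eq {z w : V} (hz : G.Adj w z) : ∀ x, p x = z → x.1 = w := by
    rintro x rfl
    exact eq_of_adj_of_degree_eq_one (hp_degree x) (hp_adj x).symm hz.symm
  have hp_inj : p.Injective := fun x y hxy ↦ Subtype.ext (hp_eq (hp_adj y) x hxy)
  let ℓ : V → Γ := Function.extend p (fun x ↦ (2 - (G.degree x.1 : ℤ)) • g) fun _ ↦ g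
  have hℓ_chosen (x) : ℓ (p x) = (2 - (G.degree x.1 : ℤ)) • g := hp_inj.extend_apply _ _ x
  have hℓ_other (z : V) (hz : ¬ ∃ x, p x = z) : ℓ z = g := Function.extend_apply' _ _ z hz
  refine ⟨ℓ, g, fun w ↦ ?_, fun w ↦ ?_⟩
  · by_cases hw : ∃ x, p x = w
    · obtain ⟨x, rfl⟩ := hw
      have := hdeg x x.2
      rw [hℓ_chosen, Ne, IsAddTorsionFree.zsmul_eq_zero_iff_left hg]
      omega
    · rwa [hℓ_other w hw]
  · by_cases hw : G.degree w = 1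
    · obtain ⟨x, hwx⟩ := (G.degree_pos_iff_exists_adj w).1 (by omega)
      rw [sum_neighborFinset_of_degree_eq_one ℓ hw hwx]
      refine hℓ_other x ?_
      rintro ⟨y, rfl⟩
      exact hpendant w _ hwx hw (hp_degree y)
    · refine sum_neighborFinset_eq_of_forall_ne (hp_adj ⟨w, hw⟩) (hℓ_chosen ⟨w, hw⟩) ?_
      refine fun z hwz hz ↦ hℓ_other z fun ⟨x, hx⟩ ↦ hz ?_
      obtain rfl := hp_eq hwz x hx
      exact hx.symm

end Magic

section RadiusTwo

variable {V Γ : Type*} {G : SimpleGraph V}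

lemma exists_adj_adj_of_dist_eq_two {u v : V} (h : G.dist u v = 2) :
    ∃ m, G.Adj u m ∧ G.Adj m v := by
  have hedist : G.edist u v = 2 := by
    rw [← (SimpleGraph.Reachable.of_dist_ne_zero (by omega)).coe_dist_eq_edist, h]
    rfl
  obtain ⟨m, hm⟩ := (SimpleGraph.edist_eq_two_iff.1 hedist).2.2
  exact ⟨m, hm.1, hm.2.symm⟩

variable [G.LocallyFinite]

lemma exists_two_adj_degree_ne_one_of_dist_eq_two {c a b : V} (ha : G.dist c a = 2)
    (hb : G.dist c b = 2) (hab : 2 < G.dist a b) :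
    ∃ s t, s ≠ t ∧ G.Adj c s ∧ G.Adj c t ∧ G.degree s ≠ 1 ∧ G.degree t ≠ 1 := by
  obtain ⟨s, hcs, hsa⟩ := exists_adj_adj_of_dist_eq_two ha
  obtain ⟨t, hct, htb⟩ := exists_adj_adj_of_dist_eq_two hb
  have hca : c ≠ a := by rintro rfl; simp at ha
  have hcb : c ≠ b := by rintro rfl; simp at hb
  refine ⟨s, t, ?_, hcs, hct, degree_ne_one_of_adj_of_adj hca hcs.symm hsa,
    degree_ne_one_of_adj_of_adj hcb hct.symm htb⟩
  rintro rfl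
  exact hab.not_ge (G.dist_le (.cons hsa.symm (.cons htb .nil)))

lemma degree_eq_one_of_forall_dist_le (hG : G.IsTree) {c u : V} (huc : u ≠ c)
    (hu : ∀ v, G.dist c v ≤ G.dist c u) : G.degree u = 1 := by
  obtain ⟨p, hp, -⟩ := hG.connected.exists_path_of_dist c u
  refine SimpleGraph.degree_eq_one_iff_existsUnique_adj.2 ⟨p.penultimate,
    (p.adj_penultimate (SimpleGraph.Walk.not_nil_of_ne huc.symm)).symm, fun y huy ↦ ?_⟩
  obtain ⟨q, -, hq⟩ := hG.connected.exists_path_of_dist c y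
  have hdist : G.dist c u = G.dist c y + 1 := by
    have := hu y
    have := hG.dist_eq_dist_add_one_of_adj c huy
    omega
  have hqu : (q.concat huy.symm).IsPath :=
    SimpleGraph.Walk.isPath_of_length_eq_dist _ (by rw [q.length_concat, hq, hdist])
  rw [(hG.existsUnique_path c u).unique hp hqu, q.penultimate_concat]

variable {c : V}

lemma adj_center_of_degree_ne_one (hG : G.IsTree) (hc : ∀ u, G.dist c u ≤ 2) {x : V} (hxc : x ≠ c)
    (hx : G.degree x ≠ 1) : G.Adj c x := by
  have hpos : 0 < G.dist c x := hG.connected.pos_dist_of_ne hxc.symm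
  have hne_two : G.dist c x ≠ 2 := fun h ↦
    hx (degree_eq_one_of_forall_dist_le hG hxc fun v ↦ (hc v).trans_eq h.symm)
  have := hc x
  exact SimpleGraph.dist_eq_one_iff_adj.1 (by omega)

lemma degree_eq_one_of_adj_adj_center (hG : G.IsTree) (hc : ∀ u, G.dist c u ≤ 2) {x y : V}
    (hcx : G.Adj c x) (hxy : G.Adj x y) (hyc : y ≠ c) : G.degree y = 1 := by
  by_contra hy
  have hcy : G.Adj c y := adj_center_of_degree_ne_one hG hc hyc hy
  refine hG.dist_ne_of_adj c hxy ?_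
  rw [SimpleGraph.dist_eq_one_iff_adj.2 hcx, SimpleGraph.dist_eq_one_iff_adj.2 hcy]

lemma isSupport_of_ne_center (hG : G.IsTree) (hc : ∀ u, G.dist c u ≤ 2) {x : V} (hxc : x ≠ c)
    (hx : G.degree x ≠ 1) : IsSupport G x := by
  have hcx := adj_center_of_degree_ne_one hG hc hxc hx
  obtain ⟨y, hxy, hyc⟩ := exists_adj_ne_of_degree_ne_one hcx.symm hx
  exact ⟨y, hxy, degree_eq_one_of_adj_adj_center hG hc hcx hxy hyc⟩

lemma isSupport_and_three_le_degree_iff (hG : G.IsTree) (hc : ∀ u, G.dist c u ≤ 2) {s t : V}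
    (hst : s ≠ t) (hcs : G.Adj c s) (hct : G.Adj c t) (hs : G.degree s ≠ 1)
    (ht : G.degree t ≠ 1) :
    (IsSupport G c ∧ ∀ x, G.degree x ≠ 1 → 3 ≤ G.degree x) ↔
      IsSupport G c ∧ ∀ x, x ≠ c → G.degree x ≠ 1 → IsStrongSupport G x := by
  have hiff {x : V} (hxc : x ≠ c) (hx : G.degree x ≠ 1) :
      3 ≤ G.degree x ↔ IsStrongSupport G x := by
    have hcx := adj_center_of_degree_ne_one hG hc hxc hx
    exact three_le_degree_iff_isStrongSupport hcx.symm (degree_ne_one_of_adj_of_adj hst hcs hct)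
      fun y ↦ degree_eq_one_of_adj_adj_center hG hc hcx
  refine and_congr_right fun ⟨a, hca, ha⟩ ↦ ⟨fun h x hxc hx ↦ (hiff hxc hx).1 (h x hx), ?_⟩
  intro h x hx
  obtain rfl | hxc := eq_or_ne x c
  · exact Finset.two_lt_card_iff.2 ⟨s, t, a, by simpa, by simpa, by simpa, hst,
      fun hsa ↦ hs (hsa ▸ ha), fun hta ↦ ht (hta ▸ ha)⟩
  · exact (hiff hxc hx).2 (h x hxc hx)

theorem exists_isVertexMagicLabeling_iff [AddCommGroup Γ] [IsAddTorsionFree Γ] [Nontrivial Γ]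
    (hG : G.IsTree) (hc : ∀ u, G.dist c u ≤ 2) {s : V} (hcs : G.Adj c s) (hs : G.degree s ≠ 1)
    (hc₁ : G.degree c ≠ 1) :
    (∃ (ℓ : V → Γ) (μ : Γ), IsVertexMagicLabeling G ℓ μ) ↔
      IsSupport G c ∧ ∀ x, G.degree x ≠ 1 → 3 ≤ G.degree x := by
  constructor
  · rintro ⟨ℓ, μ, h⟩
    have hsupp : IsSupport G c := by
      have := hcs.degree_pos_left
      obtain ⟨y, hcy, hy⟩ := h.exists_adj_not_isSupport (x := c) (by omega)
      exact ⟨y, hcy, not_not.1 fun hy₁ ↦ hy (isSupport_of_ne_center hG hc hcy.ne' hy₁)⟩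
    refine ⟨hsupp, fun x hx ↦ ?_⟩
    obtain ⟨y, hxy, hy⟩ : ∃ y, G.Adj x y ∧ IsSupport G y := by
      obtain rfl | hxc := eq_or_ne x c
      · exact ⟨s, hcs, isSupport_of_ne_center hG hc hcs.ne' hs⟩
      · exact ⟨c, (adj_center_of_degree_ne_one hG hc hxc hx).symm, hsupp⟩
    have := hxy.degree_pos_left
    have := h.degree_ne_two_of_adj_isSupport hxy hy
    omega
  · rintro ⟨hsupp, hdeg⟩
    refine exists_isVertexMagicLabeling_of_three_le_degree (fun a b hab ha hb ↦ ?_) (fun x hx ↦ ?_)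
      hdeg
    · exact hc₁ (degree_eq_one_of_preconnected_of_adj hG.connected.preconnected hab ha hb c)
    · obtain rfl | hxc := eq_or_ne x c
      exacts [hsupp, isSupport_of_ne_center hG hc hxc hx]

end RadiusTwo

/-- Let `Γ` be an infinite torsion-free abelian group and `T` a finite
tree of diameter 4 with central vertex `vc`. Then `T` is `Γ`-vertex magic iff (i) every
non-pendant vertex is a strong support vertex, or (ii) `vc` is a weak support vertex
and every non-pendant vertex other than `vc` is a strong support vertex. -/
theorem stmt_14 {V Γ : Type*} [Fintype V] [DecidableEq V]
    [AddCommGroup Γ] [Infinite Γ]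
    (htf : ∀ (g : Γ) (n : ℤ), n ≠ 0 → n • g = 0 → g = 0)
    (T : SimpleGraph V) [DecidableRel T.Adj] (hT : T.IsTree)
    (hdiam : (∀ a b : V, T.dist a b ≤ 4) ∧ ∃ a b : V, T.dist a b = 4)
    (vc : V) (hvc : ∀ u : V, T.dist vc u ≤ 2) :
    (∃ (ℓ : V → Γ) (μ : Γ), (∀ w, ℓ w ≠ 0) ∧
        ∀ w, ∑ x ∈ T.neighborFinset w, ℓ x = μ) ↔
      ((∀ x : V, T.degree x ≠ 1 →
          ∃ a b : V, a ≠ b ∧ T.Adj x a ∧ T.Adj x b ∧ T.degree a = 1 ∧ T.degree b = 1) ∨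
       ((∃! u : V, T.Adj vc u ∧ T.degree u = 1) ∧
        (∀ x : V, x ≠ vc → T.degree x ≠ 1 →
          ∃ a b : V, a ≠ b ∧ T.Adj x a ∧ T.Adj x b ∧ T.degree a = 1 ∧ T.degree b = 1))) := by
  have : IsAddTorsionFree Γ := Module.isTorsionFree_int_iff_isAddTorsionFree.1 <|
    .of_smul_eq_zero fun n g h ↦ or_iff_not_imp_left.2 fun hn ↦ htf g n hn h
  obtain ⟨a, b, hab⟩ := hdiam.2
  have htriangle : T.dist a b ≤ T.dist vc a + T.dist vc b :=
    T.dist_comm (u := a) (v := vc) ▸ hT.connected.dist_triangle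
  have ha : T.dist vc a = 2 := by linarith [hvc a, hvc b]
  have hb : T.dist vc b = 2 := by linarith [hvc a, hvc b]
  obtain ⟨s, t, hst, hs, ht, hs₁, ht₁⟩ :=
    exists_two_adj_degree_ne_one_of_dist_eq_two ha hb (by omega)
  have hvc₁ : T.degree vc ≠ 1 := degree_ne_one_of_adj_of_adj hst hs ht
  calc (∃ (ℓ : V → Γ) (μ : Γ), IsVertexMagicLabeling T ℓ μ)
    _ ↔ IsSupport T vc ∧ ∀ x, T.degree x ≠ 1 → 3 ≤ T.degree x :=
      exists_isVertexMagicLabeling_iff hT hvc hs hs₁ hvc₁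
    _ ↔ IsSupport T vc ∧ ∀ x, x ≠ vc → T.degree x ≠ 1 → IsStrongSupport T x :=
      isSupport_and_three_le_degree_iff hT hvc hst hs ht hs₁ ht₁
    _ ↔ (∀ x, T.degree x ≠ 1 → IsStrongSupport T x) ∨
          (IsWeakSupport T vc ∧ ∀ x, x ≠ vc → T.degree x ≠ 1 → IsStrongSupport T x) :=
      isSupport_and_forall_ne_isStrongSupport_iff hvc₁
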